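/- Let p ∈ (0,1), λ = min(p, 1−p), and 0 ≤ δ ≤ 1. Then for every f : {−1,1}^n → ℝ, under the p-biased measure μ one has ‖T_{√(λ/(1−λ))·δ} f‖₂ ≤ ‖f‖_{1+δ²}. -/

import Mathlib

open Filter Function Real

noncomputable def pwt (p : ℝ) {n : ℕ} (x : Fin n → Bool) : ℝ :=
  ∏ i, if x i then p else 1 - p

noncomputable def pE (p : ℝ) {n : ℕ} (f : (Fin n → Bool) → ℝ) : ℝ :=
  ∑ x, pwt p x * f x

noncomputable def pNorm (p q : ℝ) {n : ℕ} (f : (Fin n → Bool) → ℝ) : ℝ :=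
  (pE p fun x => |f x| ^ q) ^ (1 / q)

noncomputable def pVar (p : ℝ) {n : ℕ} (f : (Fin n → Bool) → ℝ) : ℝ :=
  pE p (fun x => f x ^ 2) - (pE p f) ^ 2

noncomputable def condE (p : ℝ) {n : ℕ} (i : Fin n) (f : (Fin n → Bool) → ℝ) :
    (Fin n → Bool) → ℝ :=
  fun x => (1 - p) * f (Function.update x i false) + p * f (Function.update x i true)

noncomputable def chi (p : ℝ) {n : ℕ} (S : Finset (Fin n)) (x : Fin n → Bool) : ℝ :=
  ∏ i ∈ S, ((if x i then (1:ℝ) else -1) - (2 * p - 1)) / (2 * Real.sqrt (p * (1 - p)))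

noncomputable def fhat (p : ℝ) {n : ℕ} (f : (Fin n → Bool) → ℝ) (S : Finset (Fin n)) : ℝ :=
  pE p fun x => f x * chi p S x

noncomputable def noiseOp (p δ : ℝ) {n : ℕ} (f : (Fin n → Bool) → ℝ) :
    (Fin n → Bool) → ℝ :=
  fun x => ∑ S : Finset (Fin n), δ ^ S.card * fhat p f S * chi p S x

/-!
On one bit, `T_ρ` keeps the value with probability `ρ` and resamples it otherwise. Splitting off
the first coordinate and writing `g`, `h` for `T_ρ` of the two restrictions of `f`, this gives
`‖T_ρ f‖₂² = E[(p g + (1 - p) h)² + ρ² p (1 - p) (g - h)²]`, and by Cauchy–Schwarz `g` and `h` may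
be replaced by the numbers `‖g‖₂` and `‖h‖₂`. Induction on the dimension is thereby reduced to a
two-point inequality for nonnegative reals. For an unbiased bit this is Bonami's inequality, proved
by differentiating twice; a biased bit with `p ≤ 1 / 2` is a mixture of an unbiased bit and a
constant, and convexity of `x ↦ x ^ q` carries the inequality over.
-/

section TwoPoint

variable {a b c p q s t y : ℝ}

lemma two_le_rpow_one_add_add_rpow_one_sub (ht : t ≤ 0) (hy : |y| < 1) :
    2 ≤ (1 + y) ^ t + (1 - y) ^ t := by
  obtain ⟨hy_neg, hy_one⟩ := abs_lt.1 hy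
  have h_add : 0 < 1 + y := by linarith
  have h_sub : 0 < 1 - y := by linarith
  have h_prod : 1 ≤ (1 + y) ^ t * (1 - y) ^ t := by
    rw [← mul_rpow h_add.le h_sub.le]
    exact one_le_rpow_of_pos_of_le_one_of_nonpos (mul_pos h_add h_sub)
      (by nlinarith [sq_nonneg y]) ht
  simpa only [mul_one] using two_mul_le_add_of_sq_le_mul (r := 1)
    (rpow_nonneg h_add.le t) (rpow_nonneg h_sub.le t) (by simpa only [one_pow] using h_prod)

lemma two_mul_le_rpow_one_add_sub_rpow_one_sub (hs : s ∈ Set.Icc 0 1) (hy : y ∈ Set.Icc 0 1) :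
    2 * s * y ≤ (1 + y) ^ s - (1 - y) ^ s := by
  have h_mono : MonotoneOn (fun x : ℝ ↦ (1 + x) ^ s - (1 - x) ^ s - 2 * s * x) (Set.Icc 0 1) := by
    refine monotoneOn_of_hasDerivWithinAt_nonneg
      (f' := fun x ↦ s * ((1 + x) ^ (s - 1) + (1 - x) ^ (s - 1) - 2)) (convex_Icc 0 1)
      ?_ (fun x hx ↦ ?_) (fun x hx ↦ ?_)
    · have hs_cont (u : ℝ) : u ≠ 0 ∨ 0 ≤ s := Or.inr hs.1
      exact (((continuous_const.add continuous_id).rpow_const fun _ ↦ hs_cont _).sub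
        ((continuous_const.sub continuous_id).rpow_const fun _ ↦ hs_cont _)).sub
        (continuous_const.mul continuous_id) |>.continuousOn
    · rw [interior_Icc] at hx
      have h_add := ((hasDerivAt_id x).const_add 1).rpow_const (p := s)
        (Or.inl (by simp only [id]; linarith [hx.1]))
      have h_sub := ((hasDerivAt_id x).const_sub 1).rpow_const (p := s)
        (Or.inl (by simp only [id]; linarith [hx.2]))
      refine (((h_add.sub h_sub).sub
        ((hasDerivAt_id x).const_mul (2 * s))).congr_deriv ?_).hasDerivWithinAt
      simp only [id]
      ring
    · rw [interior_Icc] at hx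
      have h_two := two_le_rpow_one_add_add_rpow_one_sub (t := s - 1) (by linarith [hs.2])
        (abs_lt.2 ⟨by linarith [hx.1], hx.2⟩)
      exact mul_nonneg hs.1 (by linarith)
  have h := h_mono (Set.left_mem_Icc.2 zero_le_one) hy hy.1
  simp only [add_zero, sub_zero, sub_self, mul_zero] at h
  linarith

lemma one_add_mul_sq_le_rpow_one_add_add_rpow_one_sub (hq : q ∈ Set.Icc 1 2)
    (hy : y ∈ Set.Icc 0 1) :
    1 + q / 2 * ((q - 1) * y ^ 2) ≤ ((1 + y) ^ q + (1 - y) ^ q) / 2 := by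
  have h_mono : MonotoneOn (fun x : ℝ ↦ (1 + x) ^ q + (1 - x) ^ q - q * (q - 1) * x ^ 2)
      (Set.Icc 0 1) := by
    refine monotoneOn_of_hasDerivWithinAt_nonneg
      (f' := fun x ↦ q * ((1 + x) ^ (q - 1) - (1 - x) ^ (q - 1) - 2 * (q - 1) * x))
      (convex_Icc 0 1) ?_ (fun x _ ↦ ?_) (fun x hx ↦ ?_)
    · have hq_cont (u : ℝ) : u ≠ 0 ∨ 0 ≤ q := Or.inr (by linarith [hq.1])
      exact (((continuous_const.add continuous_id).rpow_const fun _ ↦ hq_cont _).add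
        ((continuous_const.sub continuous_id).rpow_const fun _ ↦ hq_cont _)).sub
        (continuous_const.mul (continuous_pow 2)) |>.continuousOn
    · have h_add := ((hasDerivAt_id x).const_add 1).rpow_const (p := q) (Or.inr hq.1)
      have h_sub := ((hasDerivAt_id x).const_sub 1).rpow_const (p := q) (Or.inr hq.1)
      refine (((h_add.add h_sub).sub
        ((hasDerivAt_pow 2 x).const_mul (q * (q - 1)))).congr_deriv ?_).hasDerivWithinAt
      simp only [id, Nat.cast_ofNat]
      ring
    · rw [interior_Icc] at hx
      have h := two_mul_le_rpow_one_add_sub_rpow_one_sub (s := q - 1)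
        ⟨by linarith [hq.1], by linarith [hq.2]⟩ (Set.Ioo_subset_Icc_self hx)
      exact mul_nonneg (by linarith [hq.1]) (by linarith)
  have h := h_mono (Set.left_mem_Icc.2 zero_le_one) hy hy.1
  simp only [add_zero, sub_zero, one_rpow, ne_eq, OfNat.ofNat_ne_zero, not_false_eq_true,
    zero_pow, mul_zero] at h
  linarith

lemma sqrt_one_add_mul_sq_rpow_le (hq : q ∈ Set.Icc 1 2) (hy : y ∈ Set.Icc 0 1) :
    √(1 + (q - 1) * y ^ 2) ^ q ≤ ((1 + y) ^ q + (1 - y) ^ q) / 2 := by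
  have h_nonneg : 0 ≤ (q - 1) * y ^ 2 := mul_nonneg (by linarith [hq.1]) (sq_nonneg y)
  calc √(1 + (q - 1) * y ^ 2) ^ q
      = (1 + (q - 1) * y ^ 2) ^ (q / 2) := (rpow_div_two_eq_sqrt q (by linarith)).symm
    _ ≤ 1 + q / 2 * ((q - 1) * y ^ 2) := rpow_one_add_le_one_add_mul_self (by linarith)
        (by linarith [hq.1]) (by linarith [hq.2])
    _ ≤ ((1 + y) ^ q + (1 - y) ^ q) / 2 := one_add_mul_sq_le_rpow_one_add_add_rpow_one_sub hq hy

lemma bonami_two_point (hq : q ∈ Set.Icc 1 2) (ha : 0 ≤ a) (hb : 0 ≤ b) :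
    √(((a + b) / 2) ^ 2 + (q - 1) * ((a - b) / 2) ^ 2) ^ q ≤ (a ^ q + b ^ q) / 2 := by
  wlog hba : b ≤ a generalizing a b
  · have h := this hb ha (le_of_not_ge hba)
    rwa [add_comm b a, ← neg_sub a b, neg_div, neg_sq, add_comm (b ^ q)] at h
  obtain rfl | ha_pos := ha.eq_or_lt
  · obtain rfl : b = 0 := le_antisymm hba hb
    have hq_ne : q ≠ 0 := by linarith [hq.1]
    simp [zero_rpow hq_ne]
  obtain ⟨m, hm⟩ : ∃ m, m = (a + b) / 2 := ⟨_, rfl⟩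
  have hm_pos : 0 < m := by linarith
  obtain ⟨y, hy⟩ : ∃ y, y = (a - b) / 2 / m := ⟨_, rfl⟩
  have h_dev : (a - b) / 2 = m * y := by rw [hy]; field_simp
  have hy_mem : y ∈ Set.Icc 0 1 := by
    rw [hy]
    exact ⟨div_nonneg (by linarith) hm_pos.le, (div_le_one hm_pos).2 (by linarith)⟩
  have ha_eq : a = m * (1 + y) := by linarith
  have hb_eq : b = m * (1 - y) := by linarith
  have h_scale : √(m ^ 2 + (q - 1) * (m * y) ^ 2) = m * √(1 + (q - 1) * y ^ 2) := by
    rw [← sqrt_sq hm_pos.le, ← sqrt_mul (sq_nonneg m), sqrt_sq hm_pos.le]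
    ring_nf
  calc √(((a + b) / 2) ^ 2 + (q - 1) * ((a - b) / 2) ^ 2) ^ q
      = m ^ q * √(1 + (q - 1) * y ^ 2) ^ q := by
        rw [← hm, h_dev, h_scale, mul_rpow hm_pos.le (sqrt_nonneg _)]
    _ ≤ m ^ q * (((1 + y) ^ q + (1 - y) ^ q) / 2) := by
        gcongr
        exact sqrt_one_add_mul_sq_rpow_le hq hy_mem
    _ = (a ^ q + b ^ q) / 2 := by
        rw [ha_eq, hb_eq, mul_rpow hm_pos.le (by linarith [hy_mem.1]),
          mul_rpow hm_pos.le (by linarith [hy_mem.2])]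
        ring

lemma biased_two_point_of_le_half (hq : q ∈ Set.Icc 1 2) (hp : p ∈ Set.Icc 0 (1 / 2))
    (hc : c ≤ (q - 1) * p ^ 2) (ha : 0 ≤ a) (hb : 0 ≤ b) :
    √((p * a + (1 - p) * b) ^ 2 + c * (a - b) ^ 2) ^ q ≤ p * a ^ q + (1 - p) * b ^ q := by
  obtain ⟨hp0, hp_half⟩ := hp
  have h_weight : 0 ≤ 1 - 2 * p := by linarith
  have hq0 : 0 ≤ q - 1 := by linarith [hq.1]
  -- The `p`-biased bit is a uniform bit with probability `2 * p`, and equal to `b` otherwise.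
  set N := √(((a + b) / 2) ^ 2 + (q - 1) * ((a - b) / 2) ^ 2)
  have hN_sq : N ^ 2 = ((a + b) / 2) ^ 2 + (q - 1) * ((a - b) / 2) ^ 2 := sq_sqrt (by positivity)
  have h_mean_le : (a + b) / 2 ≤ N :=
    le_sqrt_of_sq_le (le_add_of_nonneg_right (mul_nonneg hq0 (sq_nonneg _)))
  have h_sqrt_le : √((p * a + (1 - p) * b) ^ 2 + c * (a - b) ^ 2)
      ≤ 2 * p * N + (1 - 2 * p) * b := by
    refine sqrt_le_iff.2 ⟨by positivity, ?_⟩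
    calc (p * a + (1 - p) * b) ^ 2 + c * (a - b) ^ 2
        ≤ (p * a + (1 - p) * b) ^ 2 + (q - 1) * p ^ 2 * (a - b) ^ 2 := by gcongr
      _ = 4 * p ^ 2 * N ^ 2 + 4 * p * (1 - 2 * p) * b * ((a + b) / 2)
            + ((1 - 2 * p) * b) ^ 2 := by rw [hN_sq]; ring
      _ ≤ 4 * p ^ 2 * N ^ 2 + 4 * p * (1 - 2 * p) * b * N + ((1 - 2 * p) * b) ^ 2 := by gcongr
      _ = (2 * p * N + (1 - 2 * p) * b) ^ 2 := by ring
  calc √((p * a + (1 - p) * b) ^ 2 + c * (a - b) ^ 2) ^ q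
      ≤ (2 * p * N + (1 - 2 * p) * b) ^ q := by
        gcongr
        linarith
    _ ≤ 2 * p * N ^ q + (1 - 2 * p) * b ^ q :=
        (convexOn_rpow hq.1).2 (sqrt_nonneg _) hb (by positivity) h_weight (by ring)
    _ ≤ 2 * p * ((a ^ q + b ^ q) / 2) + (1 - 2 * p) * b ^ q := by
        gcongr
        exact bonami_two_point hq ha hb
    _ = p * a ^ q + (1 - p) * b ^ q := by ring

lemma biased_two_point (hq : q ∈ Set.Icc 1 2) (hp : p ∈ Set.Icc 0 1)
    (hc : c ≤ (q - 1) * min p (1 - p) ^ 2) (ha : 0 ≤ a) (hb : 0 ≤ b) :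
    √((p * a + (1 - p) * b) ^ 2 + c * (a - b) ^ 2) ^ q ≤ p * a ^ q + (1 - p) * b ^ q := by
  obtain h | h := le_total p (1 - p)
  · rw [min_eq_left h] at hc
    exact biased_two_point_of_le_half hq ⟨hp.1, by linarith⟩ hc ha hb
  · rw [min_eq_right h] at hc
    have h_swap := biased_two_point_of_le_half hq (p := 1 - p)
      ⟨by linarith [hp.2], by linarith⟩ hc hb ha
    rwa [sub_sub_cancel, add_comm _ (p * a), add_comm _ (p * a ^ q), ← neg_sub a b, neg_sq]
      at h_swap

end TwoPoint

section NoiseKernel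

variable {p ρ : ℝ} {n : ℕ}

/-- The probability of the bit `b` under the one-coordinate `p`-biased measure. -/
noncomputable def bitWeight (p : ℝ) (b : Bool) : ℝ :=
  if b then p else 1 - p

/-- The one-coordinate `p`-biased character `χ_i`, as a function of the bit `x i`. -/
noncomputable def bitChar (p : ℝ) (b : Bool) : ℝ :=
  ((if b then 1 else -1) - (2 * p - 1)) / (2 * √(p * (1 - p)))

/-- The transition kernel of the one-coordinate noise operator: for `ρ ∈ [0, 1]`, keep the bit
with probability `ρ` and resample it from the `p`-biased measure otherwise. -/
noncomputable def noiseKernel (p ρ : ℝ) (b c : Bool) : ℝ :=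
  (if b = c then ρ else 0) + (1 - ρ) * bitWeight p c

/-- The restriction of a function on the cube to the subcube where the first bit is `b`. -/
def restrictHead (b : Bool) (f : (Fin (n + 1) → Bool) → ℝ) : (Fin n → Bool) → ℝ :=
  fun x ↦ f (Fin.cons b x)

lemma pwt_eq_prod_bitWeight (x : Fin n → Bool) : pwt p x = ∏ i, bitWeight p (x i) := rfl

lemma chi_eq_prod_bitChar (S : Finset (Fin n)) (x : Fin n → Bool) :
    chi p S x = ∏ i ∈ S, bitChar p (x i) := rfl

lemma bitChar_mul_bitChar (hp : p ∈ Set.Icc 0 1) (b c : Bool) :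
    bitChar p b * bitChar p c = ((if b then 1 else -1) - (2 * p - 1))
      * ((if c then 1 else -1) - (2 * p - 1)) / (4 * (p * (1 - p))) := by
  rw [bitChar, bitChar, div_mul_div_comm, mul_mul_mul_comm,
    mul_self_sqrt (mul_nonneg hp.1 (sub_nonneg.2 hp.2))]
  norm_num

-- The functions `1` and `bitChar p` form an orthonormal basis, so `1 + ρ χ(b) χ(c)` is the density
-- of the noise kernel with respect to the biased measure.
lemma bitWeight_mul_one_add_mul_bitChar (hp : p ∈ Set.Ioo 0 1) (b c : Bool) :
    bitWeight p c * (1 + ρ * (bitChar p b * bitChar p c)) = noiseKernel p ρ b c := by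
  have hp0 : p ≠ 0 := hp.1.ne'
  have hp1 : 1 - p ≠ 0 := (sub_pos.2 hp.2).ne'
  rw [bitChar_mul_bitChar (Set.Ioo_subset_Icc_self hp)]
  cases b <;> cases c <;>
    simp only [bitWeight, noiseKernel, if_true, Bool.false_eq_true, if_false, reduceCtorEq] <;>
    field_simp <;> ring

lemma noiseOp_eq_sum_noiseKernel (hp : p ∈ Set.Ioo 0 1) (f : (Fin n → Bool) → ℝ)
    (x : Fin n → Bool) :
    noiseOp p ρ f x = ∑ y, (∏ i, noiseKernel p ρ (x i) (y i)) * f y := by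
  have h_expand (y : Fin n → Bool) : ∏ i, noiseKernel p ρ (x i) (y i)
      = ∑ S, pwt p y * (ρ ^ S.card * (chi p S x * chi p S y)) := by
    simp_rw [← bitWeight_mul_one_add_mul_bitChar hp, Finset.prod_mul_distrib, Finset.prod_one_add,
      Finset.powerset_univ, Finset.prod_mul_distrib, Finset.prod_const, Finset.mul_sum,
      pwt_eq_prod_bitWeight, chi_eq_prod_bitChar]
  simp_rw [h_expand, noiseOp, fhat, pE, Finset.mul_sum, Finset.sum_mul]
  rw [Finset.sum_comm]
  refine Finset.sum_congr rfl fun y _ ↦ Finset.sum_congr rfl fun S _ ↦ ?_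
  ring

lemma sum_boolCube_succ (F : (Fin (n + 1) → Bool) → ℝ) :
    ∑ x, F x = ∑ x, restrictHead true F x + ∑ x, restrictHead false F x := by
  rw [← (Fin.consEquiv fun _ : Fin (n + 1) ↦ Bool).sum_comp, Fintype.sum_prod_type,
    Fintype.sum_bool]
  rfl

lemma noiseOp_cons (hp : p ∈ Set.Ioo 0 1) (f : (Fin (n + 1) → Bool) → ℝ) (b : Bool)
    (x : Fin n → Bool) :
    noiseOp p ρ f (Fin.cons b x) = ρ * noiseOp p ρ (restrictHead b f) x
      + (1 - ρ) * (p * noiseOp p ρ (restrictHead true f) x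
        + (1 - p) * noiseOp p ρ (restrictHead false f) x) := by
  have h_kernel : noiseOp p ρ f (Fin.cons b x)
      = noiseKernel p ρ b true * noiseOp p ρ (restrictHead true f) x
        + noiseKernel p ρ b false * noiseOp p ρ (restrictHead false f) x := by
    simp_rw [noiseOp_eq_sum_noiseKernel hp, sum_boolCube_succ, restrictHead,
      Fin.prod_univ_succ, Fin.cons_zero, Fin.cons_succ, Finset.mul_sum, mul_assoc]
  rw [h_kernel]
  cases b <;> simp only [noiseKernel, bitWeight, if_true, Bool.false_eq_true, if_false,
    Bool.true_eq_false] <;> ring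

end NoiseKernel

section Norms

variable {p q ρ c : ℝ} {n : ℕ}

lemma pwt_nonneg (hp : p ∈ Set.Icc 0 1) (x : Fin n → Bool) : 0 ≤ pwt p x :=
  Finset.prod_nonneg fun i _ ↦ by split_ifs <;> linarith [hp.1, hp.2]

lemma pE_nonneg (hp : p ∈ Set.Icc 0 1) {F : (Fin n → Bool) → ℝ} (hF : ∀ x, 0 ≤ F x) :
    0 ≤ pE p F :=
  Finset.sum_nonneg fun x _ ↦ mul_nonneg (pwt_nonneg hp x) (hF x)

lemma pE_zero (F : (Fin 0 → Bool) → ℝ) (x : Fin 0 → Bool) : pE p F = F x := by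
  rw [pE, Fintype.sum_subsingleton _ x, pwt, Fin.prod_univ_zero, one_mul]

lemma noiseOp_zero (f : (Fin 0 → Bool) → ℝ) : noiseOp p ρ f = f := by
  funext x
  rw [noiseOp, Fintype.sum_subsingleton _ ∅, fhat, pE_zero _ x, Finset.card_empty, pow_zero, chi,
    Finset.prod_empty, one_mul, mul_one, mul_one]

lemma pE_succ (F : (Fin (n + 1) → Bool) → ℝ) :
    pE p F = p * pE p (restrictHead true F) + (1 - p) * pE p (restrictHead false F) := by
  simp_rw [pE, sum_boolCube_succ, restrictHead, pwt, Fin.prod_univ_succ, Fin.cons_zero,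
    Fin.cons_succ, if_true, Bool.false_eq_true, if_false, Finset.mul_sum, mul_assoc]

lemma pE_add (F G : (Fin n → Bool) → ℝ) : pE p (fun x ↦ F x + G x) = pE p F + pE p G := by
  simp_rw [pE, mul_add, Finset.sum_add_distrib]

lemma pE_const_mul (F : (Fin n → Bool) → ℝ) (r : ℝ) :
    pE p (fun x ↦ r * F x) = r * pE p F := by
  simp_rw [pE, Finset.mul_sum, mul_left_comm]

lemma pNorm_nonneg (hp : p ∈ Set.Icc 0 1) (f : (Fin n → Bool) → ℝ) : 0 ≤ pNorm p q f :=
  rpow_nonneg (pE_nonneg hp fun _ ↦ rpow_nonneg (abs_nonneg _) _) _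

lemma pNorm_rpow (hp : p ∈ Set.Icc 0 1) (hq : q ≠ 0) (f : (Fin n → Bool) → ℝ) :
    pNorm p q f ^ q = pE p fun x ↦ |f x| ^ q := by
  have h_nonneg : 0 ≤ pE p fun x ↦ |f x| ^ q := pE_nonneg hp fun _ ↦ rpow_nonneg (abs_nonneg _) _
  rw [pNorm, one_div, rpow_inv_rpow h_nonneg hq]

lemma pNorm_two_sq (hp : p ∈ Set.Icc 0 1) (f : (Fin n → Bool) → ℝ) :
    pNorm p 2 f ^ 2 = pE p fun x ↦ f x ^ 2 := by
  simpa only [rpow_two, sq_abs] using pNorm_rpow hp two_ne_zero f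

lemma pNorm_zero (hq : q ≠ 0) (f : (Fin 0 → Bool) → ℝ) (x : Fin 0 → Bool) :
    pNorm p q f = |f x| := by
  rw [pNorm, pE_zero _ x, one_div, rpow_rpow_inv (abs_nonneg _) hq]

lemma pNorm_succ_rpow (hp : p ∈ Set.Icc 0 1) (hq : q ≠ 0) (f : (Fin (n + 1) → Bool) → ℝ) :
    pNorm p q f ^ q = p * pNorm p q (restrictHead true f) ^ q
      + (1 - p) * pNorm p q (restrictHead false f) ^ q := by
  simp_rw [pNorm_rpow hp hq]
  exact pE_succ _

lemma pE_mul_le_pNorm_two_mul_pNorm_two (hp : p ∈ Set.Icc 0 1) (g h : (Fin n → Bool) → ℝ) :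
    pE p (fun x ↦ g x * h x) ≤ pNorm p 2 g * pNorm p 2 h := by
  refine le_of_sq_le_sq ?_ (mul_nonneg (pNorm_nonneg hp g) (pNorm_nonneg hp h))
  rw [mul_pow, pNorm_two_sq hp, pNorm_two_sq hp]
  exact Finset.sum_sq_le_sum_mul_sum_of_sq_le_mul _
    (fun x _ ↦ mul_nonneg (pwt_nonneg hp x) (sq_nonneg _))
    (fun x _ ↦ mul_nonneg (pwt_nonneg hp x) (sq_nonneg _)) (fun x _ ↦ le_of_eq (by ring))

lemma pE_sq_mix_add_mul_sq_sub_le (hp : p ∈ Set.Icc 0 1) (hc : c ≤ p * (1 - p))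
    (g h : (Fin n → Bool) → ℝ) :
    pE p (fun x ↦ (p * g x + (1 - p) * h x) ^ 2 + c * (g x - h x) ^ 2)
      ≤ (p * pNorm p 2 g + (1 - p) * pNorm p 2 h) ^ 2 + c * (pNorm p 2 g - pNorm p 2 h) ^ 2 := by
  -- As a quadratic form in `(g, h)`, the integrand has the nonnegative cross term
  -- `2 * (p * (1 - p) - c)`, so Cauchy–Schwarz applies to it.
  have h_cross := mul_le_mul_of_nonneg_left (pE_mul_le_pNorm_two_mul_pNorm_two hp g h)
    (by linarith : 0 ≤ 2 * (p * (1 - p) - c))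
  calc pE p (fun x ↦ (p * g x + (1 - p) * h x) ^ 2 + c * (g x - h x) ^ 2)
      = pE p (fun x ↦ (p ^ 2 + c) * g x ^ 2 + 2 * (p * (1 - p) - c) * (g x * h x)
          + ((1 - p) ^ 2 + c) * h x ^ 2) := by congr 1; funext x; ring
    _ = (p ^ 2 + c) * pNorm p 2 g ^ 2 + 2 * (p * (1 - p) - c) * pE p (fun x ↦ g x * h x)
          + ((1 - p) ^ 2 + c) * pNorm p 2 h ^ 2 := by
        rw [pE_add, pE_add, pE_const_mul, pE_const_mul, pE_const_mul, pNorm_two_sq hp,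
          pNorm_two_sq hp]
    _ ≤ (p ^ 2 + c) * pNorm p 2 g ^ 2
          + 2 * (p * (1 - p) - c) * (pNorm p 2 g * pNorm p 2 h)
          + ((1 - p) ^ 2 + c) * pNorm p 2 h ^ 2 := by
        linarith only [h_cross]
    _ = _ := by ring

end Norms

section Hypercontractivity

variable {p q ρ : ℝ} {n : ℕ}

lemma pE_sq_noiseOp_succ (hp : p ∈ Set.Ioo 0 1) (f : (Fin (n + 1) → Bool) → ℝ) :
    pE p (fun x ↦ noiseOp p ρ f x ^ 2) = pE p fun x ↦
      (p * noiseOp p ρ (restrictHead true f) x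
        + (1 - p) * noiseOp p ρ (restrictHead false f) x) ^ 2
      + ρ ^ 2 * (p * (1 - p)) * (noiseOp p ρ (restrictHead true f) x
        - noiseOp p ρ (restrictHead false f) x) ^ 2 := by
  rw [pE_succ, ← pE_const_mul, ← pE_const_mul, ← pE_add]
  congr 1
  funext x
  simp only [restrictHead, noiseOp_cons hp]
  ring

lemma pNorm_two_noiseOp_succ_le (hp : p ∈ Set.Ioo 0 1) (hρ : |ρ| ≤ 1)
    (f : (Fin (n + 1) → Bool) → ℝ) :
    pNorm p 2 (noiseOp p ρ f)
      ≤ √((p * pNorm p 2 (noiseOp p ρ (restrictHead true f))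
          + (1 - p) * pNorm p 2 (noiseOp p ρ (restrictHead false f))) ^ 2
        + ρ ^ 2 * (p * (1 - p)) * (pNorm p 2 (noiseOp p ρ (restrictHead true f))
          - pNorm p 2 (noiseOp p ρ (restrictHead false f))) ^ 2) := by
  have hp' : p ∈ Set.Icc 0 1 := Set.Ioo_subset_Icc_self hp
  have h_coeff : ρ ^ 2 * (p * (1 - p)) ≤ p * (1 - p) :=
    mul_le_of_le_one_left (mul_nonneg hp'.1 (sub_nonneg.2 hp'.2))
      ((sq_le_one_iff_abs_le_one ρ).2 hρ)
  refine le_sqrt_of_sq_le ?_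
  rw [pNorm_two_sq hp', pE_sq_noiseOp_succ hp]
  exact pE_sq_mix_add_mul_sq_sub_le hp' h_coeff _ _

lemma min_one_sub_le_one_sub_min (p : ℝ) : min p (1 - p) ≤ 1 - min p (1 - p) := by
  linarith [min_le_left p (1 - p), min_le_right p (1 - p)]

lemma one_sub_min_pos (p : ℝ) : 0 < 1 - min p (1 - p) := by
  linarith [min_one_sub_le_one_sub_min p]

lemma min_div_one_sub_min_mem_Icc (hp : p ∈ Set.Icc 0 1) :
    min p (1 - p) / (1 - min p (1 - p)) ∈ Set.Icc 0 1 :=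
  ⟨div_nonneg (le_min hp.1 (sub_nonneg.2 hp.2)) (one_sub_min_pos p).le,
    (div_le_one (one_sub_min_pos p)).2 (min_one_sub_le_one_sub_min p)⟩

lemma min_div_one_sub_min_mul_mul_one_sub (p : ℝ) :
    min p (1 - p) / (1 - min p (1 - p)) * (p * (1 - p)) = min p (1 - p) ^ 2 := by
  have h_prod : p * (1 - p) = min p (1 - p) * (1 - min p (1 - p)) := by
    obtain h | h := min_choice p (1 - p) <;> rw [h]
    ring
  rw [h_prod, div_mul_eq_mul_div, ← mul_assoc, ← sq]
  exact mul_div_cancel_right₀ _ (one_sub_min_pos p).ne'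

theorem pNorm_two_noiseOp_le (hp : p ∈ Set.Ioo 0 1) (hq : q ∈ Set.Icc 1 2)
    (hρ : ρ ^ 2 ≤ min p (1 - p) / (1 - min p (1 - p)) * (q - 1)) (f : (Fin n → Bool) → ℝ) :
    pNorm p 2 (noiseOp p ρ f) ≤ pNorm p q f := by
  have hp' : p ∈ Set.Icc 0 1 := Set.Ioo_subset_Icc_self hp
  have h_compl : 0 ≤ 1 - p := sub_nonneg.2 hp'.2
  have hq_pos : 0 < q := by linarith [hq.1]
  have hρ_abs : |ρ| ≤ 1 := (sq_le_one_iff_abs_le_one ρ).1 <| hρ.trans <|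
    mul_le_one₀ (min_div_one_sub_min_mem_Icc hp').2 (by linarith [hq.1]) (by linarith [hq.2])
  have h_coeff : ρ ^ 2 * (p * (1 - p)) ≤ (q - 1) * min p (1 - p) ^ 2 := by
    rw [← min_div_one_sub_min_mul_mul_one_sub, ← mul_assoc (q - 1), mul_comm (q - 1)]
    exact mul_le_mul_of_nonneg_right hρ (mul_nonneg hp'.1 h_compl)
  induction n with
  | zero => rw [noiseOp_zero, pNorm_zero two_ne_zero f default, pNorm_zero hq_pos.ne' f default]
  | succ n ih =>
    have ih_rpow (b : Bool) : pNorm p 2 (noiseOp p ρ (restrictHead b f)) ^ q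
        ≤ pNorm p q (restrictHead b f) ^ q :=
      rpow_le_rpow (pNorm_nonneg hp' _) (ih _) hq_pos.le
    rw [← rpow_le_rpow_iff (pNorm_nonneg hp' _) (pNorm_nonneg hp' _) hq_pos]
    calc pNorm p 2 (noiseOp p ρ f) ^ q
        ≤ p * pNorm p 2 (noiseOp p ρ (restrictHead true f)) ^ q
            + (1 - p) * pNorm p 2 (noiseOp p ρ (restrictHead false f)) ^ q :=
          (rpow_le_rpow (pNorm_nonneg hp' _) (pNorm_two_noiseOp_succ_le hp hρ_abs f)
            hq_pos.le).trans
          (biased_two_point hq hp' h_coeff (pNorm_nonneg hp' _) (pNorm_nonneg hp' _))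
      _ ≤ p * pNorm p q (restrictHead true f) ^ q
            + (1 - p) * pNorm p q (restrictHead false f) ^ q :=
          add_le_add (mul_le_mul_of_nonneg_left (ih_rpow true) hp'.1)
            (mul_le_mul_of_nonneg_left (ih_rpow false) h_compl)
      _ = pNorm p q f ^ q := (pNorm_succ_rpow hp' hq_pos.ne' f).symm

end Hypercontractivity

theorem stmt4_general {p : ℝ} (hp : p ∈ Set.Ioo 0 1) {δ : ℝ} (hδ : |δ| ≤ 1) {n : ℕ}
    (f : (Fin n → Bool) → ℝ) :
    pNorm p 2 (noiseOp p (√(min p (1 - p) / (1 - min p (1 - p))) * δ) f)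
      ≤ pNorm p (1 + δ ^ 2) f := by
  have hδ_sq : δ ^ 2 ≤ 1 := (sq_le_one_iff_abs_le_one δ).2 hδ
  have h_ratio := (min_div_one_sub_min_mem_Icc (Set.Ioo_subset_Icc_self hp)).1
  refine pNorm_two_noiseOp_le hp ⟨by linarith [sq_nonneg δ], by linarith⟩ (le_of_eq ?_) f
  rw [mul_pow, sq_sqrt h_ratio, add_sub_cancel_left]

/-- Corollary of hypercontractivity: ‖T_{√(λ/(1-λ))·δ} f‖₂ ≤ ‖f‖_{1+δ²}. -/
theorem stmt4 (p : ℝ) (hp : p ∈ Set.Ioo (0:ℝ) 1) (δ : ℝ) (hδ : δ ∈ Set.Icc (0:ℝ) 1)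
    (n : ℕ) (f : (Fin n → Bool) → ℝ) :
    pNorm p 2 (noiseOp p (Real.sqrt (min p (1 - p) / (1 - min p (1 - p))) * δ) f)
      ≤ pNorm p (1 + δ ^ 2) f :=
  stmt4_general hp (abs_le.2 ⟨by linarith [hδ.1], hδ.2⟩) f
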